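/- The dilation wavelet family forms a dyadic partition of unity in energy: Σ_{ℓ∈ℤ} |φ₁(2^ℓ a)|² = 1 for all a > 0. -/

import Mathlib

/-- The auxiliary Meyer function `ν`. -/
noncomputable def meyerNu (u : ℝ) : ℝ :=
  if u < 0 then 0
  else if u ≤ 1 then 35 * u ^ 4 - 84 * u ^ 5 + 70 * u ^ 6 - 20 * u ^ 7
  else 1

/-- The dilation wavelet `φ₁`. -/
noncomputable def dilWavelet (a : ℝ) : ℝ :=
  if 1 / 3 ≤ |a| ∧ |a| ≤ 2 / 3 then Real.sin (Real.pi / 2 * meyerNu (3 * a - 1))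
  else if 2 / 3 ≤ |a| ∧ |a| ≤ 4 / 3 then Real.cos (Real.pi / 2 * meyerNu (3 * a / 2 - 1))
  else 0

/-- The boost bump `φ₂(θ) = √(ν(δ(1 − |θ|)))`. -/
noncomputable def boostBump (δ θ : ℝ) : ℝ := Real.sqrt (meyerNu (δ * (1 - |θ|)))

/-- The Meyer scaling function `φ`. -/
noncomputable def meyerScaling (a : ℝ) : ℝ :=
  if |a| ≤ 1 / 3 then 1
  else if |a| ≤ 2 / 3 then Real.cos (Real.pi / 2 * meyerNu (3 * a - 1))
  else 0

/-!
If `a ≠ 0`, some integer `n` puts `|2 ^ n * a|` into `(1 / 3, 2 / 3]`. With `b = 2 ^ n * a`, all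
dyadic dilates of `a` except `b` and `2 * b` fall where the wavelet vanishes. The phase `3 * x - 1`
of the sine branch at `b` equals the phase `3 * x / 2 - 1` of the cosine branch at `2 * b`, so the
two remaining terms add up to `sin² + cos² = 1`.
-/

section DyadicSum

variable {K M : Type*} [Field K] [LinearOrder K] [IsStrictOrderedRing K]
  [AddCommMonoid M] [TopologicalSpace M] {f : K → M} {s : M} {r c a : K}

theorem exists_abs_zpow_mul_mem_Ioc [Archimedean K] (hr : 1 < r) (hc : 0 < c) (ha : a ≠ 0) :
    ∃ n : ℤ, |r ^ n * a| ∈ Set.Ioc c (r * c) := by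
  have hr₀ : 0 < r := one_pos.trans hr
  obtain ⟨n, hlt, hle⟩ := exists_mem_Ioc_zpow (div_pos (abs_pos.2 ha) hc) hr
  rw [lt_div_iff₀ hc] at hlt
  rw [div_le_iff₀ hc, zpow_add_one₀ hr₀.ne'] at hle
  have habs : |r ^ (-n) * a| = |a| / r ^ n := by
    rw [abs_mul, abs_of_pos (zpow_pos hr₀ _), zpow_neg, inv_mul_eq_div]
  refine ⟨-n, ?_, ?_⟩
  · rwa [habs, lt_div_iff₀' (zpow_pos hr₀ n)]
  · rwa [habs, div_le_iff₀' (zpow_pos hr₀ n), ← mul_assoc]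

theorem hasSum_zpow_mul_of_mem_Ioc (hr : 1 < r)
    (h_small : ∀ x, |x| ≤ c → f x = 0) (h_large : ∀ x, r ^ 2 * c < |x| → f x = 0)
    (ha : |a| ∈ Set.Ioc c (r * c)) :
    HasSum (fun k : ℤ ↦ f (r ^ k * a)) (f a + f (r * a)) := by
  have hr₀ : 0 < r := one_pos.trans hr
  have habs (k : ℤ) : |r ^ k * a| = r ^ k * |a| := by
    rw [abs_mul, abs_of_pos (zpow_pos hr₀ k)]
  have h_vanish (k : ℤ) (hk : k ∉ ({0, 1} : Finset ℤ)) : f (r ^ k * a) = 0 := by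
    simp only [Finset.mem_insert, Finset.mem_singleton, not_or] at hk
    rcases (by omega : k ≤ -1 ∨ 2 ≤ k) with hk | hk
    · apply h_small
      calc |r ^ k * a| = r ^ k * |a| := habs k
        _ ≤ r ^ (-1 : ℤ) * (r * c) := by gcongr; exacts [hr.le, ha.2]
        _ = c := by rw [zpow_neg_one, inv_mul_cancel_left₀ hr₀.ne']
    · apply h_large
      calc r ^ 2 * c < r ^ (2 : ℤ) * |a| := by
            rw [zpow_ofNat]; gcongr; exact ha.1
        _ ≤ r ^ k * |a| := by gcongr; exact hr.le
        _ = |r ^ k * a| := (habs k).symm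
  simpa using hasSum_sum_of_ne_finset_zero h_vanish

theorem hasSum_zpow_mul_of_add_eq [Archimedean K] (hr : 1 < r) (hc : 0 < c)
    (h_small : ∀ x, |x| ≤ c → f x = 0) (h_large : ∀ x, r ^ 2 * c < |x| → f x = 0)
    (h_add : ∀ x, |x| ∈ Set.Ioc c (r * c) → f x + f (r * x) = s) (ha : a ≠ 0) :
    HasSum (fun k : ℤ ↦ f (r ^ k * a)) s := by
  obtain ⟨n, hn⟩ := exists_abs_zpow_mul_mem_Ioc hr hc ha
  rw [← (Equiv.addRight n).hasSum_iff]
  have h_shift (k : ℤ) : r ^ (k + n) * a = r ^ k * (r ^ n * a) := by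
    rw [zpow_add₀ (one_pos.trans hr).ne', mul_assoc]
  simpa only [Function.comp_def, Equiv.coe_addRight, h_shift, h_add _ hn] using
    hasSum_zpow_mul_of_mem_Ioc hr h_small h_large hn

end DyadicSum

section DilWavelet

variable {u x a : ℝ}

theorem meyerNu_eq_zero_of_nonpos (hu : u ≤ 0) : meyerNu u = 0 := by
  rcases hu.lt_or_eq with hu | rfl
  · exact if_pos hu
  · norm_num [meyerNu]

theorem dilWavelet_eq_sin (h₁ : 1 / 3 ≤ |x|) (h₂ : |x| ≤ 2 / 3) :
    dilWavelet x = Real.sin (Real.pi / 2 * meyerNu (3 * x - 1)) :=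
  if_pos ⟨h₁, h₂⟩

theorem dilWavelet_eq_cos (h₁ : 2 / 3 < |x|) (h₂ : |x| ≤ 4 / 3) :
    dilWavelet x = Real.cos (Real.pi / 2 * meyerNu (3 * x / 2 - 1)) := by
  rw [dilWavelet, if_neg fun h ↦ h₁.not_ge h.2, if_pos ⟨h₁.le, h₂⟩]

theorem dilWavelet_eq_zero_of_abs_le (hx : |x| ≤ 1 / 3) : dilWavelet x = 0 := by
  rcases hx.lt_or_eq with hlt | heq
  · rw [dilWavelet, if_neg (by grind), if_neg (by grind)]
  · have hν : meyerNu (3 * x - 1) = 0 := meyerNu_eq_zero_of_nonpos (by linarith [le_abs_self x])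
    rw [dilWavelet_eq_sin heq.ge (by linarith), hν, mul_zero, Real.sin_zero]

theorem dilWavelet_eq_zero_of_lt_abs (hx : 4 / 3 < |x|) : dilWavelet x = 0 := by
  rw [dilWavelet, if_neg (by grind), if_neg (by grind)]

theorem dilWavelet_sq_add_dilWavelet_two_mul_sq (h₁ : 1 / 3 < |x|) (h₂ : |x| ≤ 2 / 3) :
    dilWavelet x ^ 2 + dilWavelet (2 * x) ^ 2 = 1 := by
  have h_two : |2 * x| = 2 * |x| := by rw [abs_mul, abs_two]
  have h_phase : 3 * (2 * x) / 2 - 1 = 3 * x - 1 := by ring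
  rw [dilWavelet_eq_sin h₁.le h₂, dilWavelet_eq_cos (by linarith) (by linarith), h_phase,
    Real.sin_sq_add_cos_sq]

theorem dilWavelet_partition_general (ha : a ≠ 0) :
    HasSum (fun ℓ : ℤ ↦ |dilWavelet ((2 : ℝ) ^ ℓ * a)| ^ 2) 1 := by
  simp only [sq_abs]
  refine hasSum_zpow_mul_of_add_eq (f := fun x ↦ dilWavelet x ^ 2) (c := 1 / 3)
    one_lt_two (by norm_num) (fun x hx ↦ ?_) (fun x hx ↦ ?_) (fun x hx ↦ ?_) ha
  · rw [dilWavelet_eq_zero_of_abs_le hx, zero_pow two_ne_zero]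
  · rw [dilWavelet_eq_zero_of_lt_abs (by linarith), zero_pow two_ne_zero]
  · exact dilWavelet_sq_add_dilWavelet_two_mul_sq hx.1 (by linarith [hx.2])

end DilWavelet

/-- The dilation wavelet family forms a dyadic partition of unity in energy:
`Σ_{ℓ∈ℤ} |φ₁(2^ℓ a)|² = 1` for all `a > 0`. -/
theorem dilWavelet_partition (a : ℝ) (ha : 0 < a) :
    ∑' ℓ : ℤ, |dilWavelet ((2 : ℝ) ^ ℓ * a)| ^ 2 = 1 :=
  (dilWavelet_partition_general ha.ne').tsum_eq
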